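/- arXiv:1205.1782 — 2 statements merged into one kernel-verified Lean document; each statement's English description precedes it below -/
import Mathlib

section
/- For every randomized policy π, the state-action occupancy frequency u_π belongs to the set U; that is, u_π ≥ 0 componentwise, Aᵀ u_π = (1−γ)·α, and 1ᵀ u_π = 1 (u_π is a probability distribution on S×A). -/
open Matrix BigOperators

namespace DRADP

variable {S A K : Type*} [Fintype S] [Fintype A] [Fintype K] [DecidableEq S] [DecidableEq A]

/-- A randomized policy: nonnegative with rows summing to one. -/
def isPolicy (π : S → A → ℝ) : Prop :=
  (∀ s a, 0 ≤ π s a) ∧ ∀ s, ∑ a, π s a = 1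

/-- The randomized policy corresponding to a deterministic policy `p : S → A`. -/
def detPol (p : S → A) : S → A → ℝ := fun s a => if a = p s then 1 else 0

/-- Transition matrix `P_π` of a policy. -/
noncomputable def Pmat (P : S → A → S → ℝ) (π : S → A → ℝ) : Matrix S S ℝ :=
  Matrix.of fun s s' => ∑ a, P s a s' * π s a

/-- Reward vector `r_π` of a policy. -/
noncomputable def rvec (r : S → A → ℝ) (π : S → A → ℝ) : S → ℝ :=
  fun s => ∑ a, r s a * π s a

/-- State occupancy frequency `d_π = (1-γ)·∑_t γ^t (P_πᵀ)^t α`. -/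
noncomputable def dOcc (P : S → A → S → ℝ) (α : S → ℝ) (γ : ℝ) (π : S → A → ℝ) : S → ℝ :=
  fun s => (1 - γ) * ∑' t : ℕ, γ ^ t * (((Pmat P π)ᵀ ^ t) *ᵥ α) s

/-- State-action occupancy frequency `u_π(s,a) = d_π(s)·π(s,a)`. -/
noncomputable def uOcc (P : S → A → S → ℝ) (α : S → ℝ) (γ : ℝ) (π : S → A → ℝ) : S × A → ℝ :=
  fun w => dOcc P α γ π w.1 * π w.1 w.2

/-- Value function `v_π = ∑_t γ^t P_π^t r_π`. -/
noncomputable def vVal (P : S → A → S → ℝ) (r : S → A → ℝ) (γ : ℝ) (π : S → A → ℝ) : S → ℝ :=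
  fun s => ∑' t : ℕ, γ ^ t * ((Pmat P π ^ t) *ᵥ rvec r π) s

/-- The return `ρ(π) = αᵀ v_π`. -/
noncomputable def ret (P : S → A → S → ℝ) (r : S → A → ℝ) (α : S → ℝ) (γ : ℝ)
    (π : S → A → ℝ) : ℝ :=
  ∑ s, α s * vVal P r γ π s

/-- The matrix `A` with rows `A((s,a),·) = e_sᵀ − γ·P(s,a,·)`. -/
def Amat (P : S → A → S → ℝ) (γ : ℝ) : Matrix (S × A) S ℝ :=
  Matrix.of fun w s' => (if w.1 = s' then (1 : ℝ) else 0) - γ * P w.1 w.2 s'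

/-- The vector `b(s,a) = r(s,a)`. -/
def bvec (r : S → A → ℝ) : S × A → ℝ := fun w => r w.1 w.2

/-- `U = {u : u ≥ 0, Aᵀu = (1−γ)·α}`. -/
def Uset (P : S → A → S → ℝ) (α : S → ℝ) (γ : ℝ) : Set (S × A → ℝ) :=
  {u | (∀ w, 0 ≤ u w) ∧ (Amat P γ)ᵀ *ᵥ u = fun s => (1 - γ) * α s}

/-- The Bellman operator `L`. -/
noncomputable def bell (P : S → A → S → ℝ) (r : S → A → ℝ) (γ : ℝ) (v : S → ℝ) : S → ℝ :=
  fun s => ⨆ a : A, (r s a + γ * ∑ s', P s a s' * v s')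

/-- A deterministic policy `p` is greedy w.r.t. `v`. -/
def isGreedy (P : S → A → S → ℝ) (r : S → A → ℝ) (γ : ℝ) (p : S → A) (v : S → ℝ) : Prop :=
  ∀ s a, r s a + γ * ∑ s', P s a s' * v s' ≤ r s (p s) + γ * ∑ s', P s (p s) s' * v s'

/-- Approximate occupancy frequencies `Ũ(π)`. -/
def Utilde (P : S → A → S → ℝ) (α : S → ℝ) (γ : ℝ) (Φ : Matrix S K ℝ) (π : S → A → ℝ) :
    Set (S × A → ℝ) :=
  {u | (∀ w, 0 ≤ u w) ∧
    (Φᵀ *ᵥ ((Amat P γ)ᵀ *ᵥ u) = fun j => (1 - γ) * (Φᵀ *ᵥ α) j) ∧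
    ∀ w, u w ≤ π w.1 w.2}

/-- The distributionally robust return estimate
`ρ̃(π) = sup_{v∈Ṽ} (αᵀv − sup_{u∈Ũ(π)} uᵀ(Av − b)/(1−γ))`. -/
noncomputable def rhoTilde (P : S → A → S → ℝ) (r : S → A → ℝ) (α : S → ℝ) (γ : ℝ)
    (Φ : Matrix S K ℝ) (π : S → A → ℝ) : ℝ :=
  ⨆ x : K → ℝ, (∑ s, α s * (Φ *ᵥ x) s -
    sSup ((fun u : S × A → ℝ =>
      (∑ w, u w * ((Amat P γ *ᵥ (Φ *ᵥ x)) w - bvec r w)) / (1 - γ)) ''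
      Utilde P α γ Φ π))

/-- The set `G` of deterministic policies greedy w.r.t. some representable value function. -/
def greedySet (P : S → A → S → ℝ) (r : S → A → ℝ) (γ : ℝ) (Φ : Matrix S K ℝ) :
    Set (S → A → ℝ) :=
  {π | ∃ p : S → A, π = detPol p ∧ ∃ x : K → ℝ, isGreedy P r γ p (Φ *ᵥ x)}

end DRADP

open DRADP

/-!
The discounted occupancy vector `d_π` is a Neumann series, which converges because its iterates
`(P_πᵀ)^t α` stay bounded, `P_πᵀ` being column stochastic. Splitting off the term `t = 0` gives the
flow equation `d_π = (1-γ)·α + γ·P_πᵀ d_π`. As `π` has unit row sums, `Aᵀ u_π = d_π - γ·P_πᵀ d_π`,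
so the flow equation says exactly that `u_π` satisfies the linear constraint of `U`. The total mass
of `u_π` is then read off by pairing that constraint with the all-ones vector, as `A 1 = (1-γ)·1`.
-/

namespace DRADP

section ColStochastic

variable {n : Type*} [Fintype n] [DecidableEq n]

theorem abs_mulVec_le_sum_abs_of_mem_colStochastic {R : Type*} [Ring R] [LinearOrder R]
    [IsOrderedRing R] {M : Matrix n n R} (hM : M ∈ colStochastic R n) (v : n → R) (i : n) :
    |(M *ᵥ v) i| ≤ ∑ j, |v j| :=
  calc |(M *ᵥ v) i| ≤ ∑ j, |M i j * v j| := Finset.abs_sum_le_sum_abs _ _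
    _ ≤ ∑ j, |v j| := Finset.sum_le_sum fun j _ => by
      rw [abs_mul, abs_of_nonneg (nonneg_of_mem_colStochastic hM)]
      exact mul_le_of_le_one_left (abs_nonneg _) (le_one_of_mem_colStochastic hM)

theorem summable_pow_smul_pow_mulVec_of_mem_colStochastic {M : Matrix n n ℝ}
    (hM : M ∈ colStochastic ℝ n) {c : ℝ} (hc : |c| < 1) (v : n → ℝ) :
    Summable fun t : ℕ => c ^ t • (M ^ t *ᵥ v) := by
  refine Pi.summable.2 fun i => Summable.of_norm_bounded
    ((summable_geometric_of_lt_one (abs_nonneg c) hc).mul_right (∑ j, |v j|)) fun t => ?_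
  simp only [Pi.smul_apply, smul_eq_mul, norm_mul, norm_pow, Real.norm_eq_abs]
  gcongr
  exact abs_mulVec_le_sum_abs_of_mem_colStochastic (pow_mem hM t) v i

end ColStochastic

theorem tsum_pow_smul_pow_mulVec_eq_add {n R : Type*} [Fintype n] [DecidableEq n] [CommSemiring R]
    [TopologicalSpace R] [IsTopologicalSemiring R] [T2Space R] {M : Matrix n n R} {c : R}
    {v : n → R} (h : Summable fun t : ℕ => c ^ t • (M ^ t *ᵥ v)) :
    ∑' t : ℕ, c ^ t • (M ^ t *ᵥ v) = v + c • (M *ᵥ ∑' t : ℕ, c ^ t • (M ^ t *ᵥ v)) := by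
  have hterm : ∀ t : ℕ, c ^ (t + 1) • (M ^ (t + 1) *ᵥ v) = c • (M *ᵥ (c ^ t • (M ^ t *ᵥ v))) :=
    fun t => by rw [mulVec_smul, mulVec_mulVec, smul_smul, ← pow_succ', ← pow_succ']
  have hmap : HasSum (fun t : ℕ => M *ᵥ (c ^ t • (M ^ t *ᵥ v)))
      (M *ᵥ ∑' t : ℕ, c ^ t • (M ^ t *ᵥ v)) :=
    h.hasSum.map M.mulVecLin (continuous_const.matrix_mulVec continuous_id)
  have hshift : HasSum (fun t : ℕ => c ^ (t + 1) • (M ^ (t + 1) *ᵥ v))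
      (c • (M *ᵥ ∑' t : ℕ, c ^ t • (M ^ t *ᵥ v))) := by
    simpa only [hterm] using hmap.const_smul c
  refine (tsum_eq_zero_add' hshift.summable).trans ?_
  rw [hshift.tsum_eq, pow_zero, pow_zero, one_smul, one_mulVec]

section MarkovDecisionProcess

variable {S A : Type*} [Fintype S] [DecidableEq S] {P : S → A → S → ℝ} {α : S → ℝ} {γ : ℝ}
  {π : S → A → ℝ}

theorem Amat_mulVec_one (hPsum : ∀ s a, ∑ s', P s a s' = 1) (γ : ℝ) :
    Amat P γ *ᵥ 1 = (1 - γ) • 1 := by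
  ext w
  simp [mulVec, dotProduct, Amat, ← Finset.mul_sum, hPsum]

variable [Fintype A]

theorem Pmat_mem_rowStochastic (hP : ∀ s a s', 0 ≤ P s a s')
    (hPsum : ∀ s a, ∑ s', P s a s' = 1) (hπ : isPolicy π) : Pmat P π ∈ rowStochastic ℝ S := by
  refine mem_rowStochastic_iff_sum.2
    ⟨fun s s' => Finset.sum_nonneg fun a _ => mul_nonneg (hP s a s') (hπ.1 s a), fun s => ?_⟩
  simp only [Pmat, of_apply]
  rw [Finset.sum_comm]
  simp only [← Finset.sum_mul, hPsum, one_mul, hπ.2]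

theorem dOcc_nonneg (hM : Pmat P π ∈ rowStochastic ℝ S) (hα : ∀ s, 0 ≤ α s)
    (hγ0 : 0 ≤ γ) (hγ1 : γ ≤ 1) (s : S) : 0 ≤ dOcc P α γ π s :=
  mul_nonneg (sub_nonneg.2 hγ1) <| tsum_nonneg fun t => mul_nonneg (pow_nonneg hγ0 t) <|
    nonneg_mulVec_of_mem_colStochastic
      (pow_mem (transpose_mem_colStochastic_iff_mem_rowStochastic.2 hM) t) hα s

theorem dOcc_eq_add_smul_transpose_Pmat_mulVec (hM : Pmat P π ∈ rowStochastic ℝ S)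
    (hγ : |γ| < 1) (α : S → ℝ) :
    dOcc P α γ π = (1 - γ) • α + γ • ((Pmat P π)ᵀ *ᵥ dOcc P α γ π) := by
  have hsum := summable_pow_smul_pow_mulVec_of_mem_colStochastic
    (transpose_mem_colStochastic_iff_mem_rowStochastic.2 hM) hγ α
  have hd : dOcc P α γ π = (1 - γ) • ∑' t : ℕ, γ ^ t • ((Pmat P π)ᵀ ^ t *ᵥ α) := by
    ext s
    simp only [dOcc, Pi.smul_apply, tsum_apply hsum, smul_eq_mul]
  rw [hd, mulVec_smul, smul_comm γ, ← smul_add, ← tsum_pow_smul_pow_mulVec_eq_add hsum]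

theorem transpose_Amat_mulVec_of_sum_eq_one (P : S → A → S → ℝ) (γ : ℝ)
    (hπ : ∀ s, ∑ a, π s a = 1) (d : S → ℝ) :
    (Amat P γ)ᵀ *ᵥ (fun w => d w.1 * π w.1 w.2) = d - γ • ((Pmat P π)ᵀ *ᵥ d) := by
  ext s'
  have hstay : ∑ s, ∑ a, (if s = s' then 1 else 0) * (d s * π s a) = d s' := by
    simp only [← Finset.mul_sum, hπ, mul_one]
    simp only [ite_mul, one_mul, zero_mul, Finset.sum_ite_eq', Finset.mem_univ, if_true]
  have hnext : ∑ s, ∑ a, γ * P s a s' * (d s * π s a) = γ * ((Pmat P π)ᵀ *ᵥ d) s' := by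
    simp only [mulVec, dotProduct, transpose_apply, Pmat, of_apply, Finset.mul_sum, Finset.sum_mul]
    exact Finset.sum_congr rfl fun s _ => Finset.sum_congr rfl fun a _ => by ring
  calc ((Amat P γ)ᵀ *ᵥ fun w => d w.1 * π w.1 w.2) s'
      = ∑ s, ∑ a, ((if s = s' then 1 else 0) - γ * P s a s') * (d s * π s a) :=
        Fintype.sum_prod_type _
    _ = d s' - γ * ((Pmat P π)ᵀ *ᵥ d) s' := by
        simp only [sub_mul, Finset.sum_sub_distrib, hstay, hnext]

theorem sum_eq_of_mem_Uset (hPsum : ∀ s a, ∑ s', P s a s' = 1) (hγ : γ ≠ 1)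
    {u : S × A → ℝ} (hu : u ∈ Uset P α γ) : ∑ w, u w = ∑ s, α s := by
  refine mul_left_cancel₀ (sub_ne_zero.2 hγ.symm) ?_
  calc (1 - γ) * ∑ w, u w = (Amat P γ *ᵥ 1) ⬝ᵥ u := by
        rw [Amat_mulVec_one hPsum, smul_dotProduct, one_dotProduct, smul_eq_mul]
    _ = 1 ⬝ᵥ ((Amat P γ)ᵀ *ᵥ u) := by rw [dotProduct_mulVec, vecMul_transpose]
    _ = (1 - γ) * ∑ s, α s := by rw [hu.2, one_dotProduct, Finset.mul_sum]

end MarkovDecisionProcess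

end DRADP

/-- for every randomized policy `π`, `u_π ∈ U` and `u_π` is a
probability distribution on `S × A`. -/
theorem uOcc_mem_Uset {S A : Type*} [Fintype S] [Fintype A] [DecidableEq S]
    (P : S → A → S → ℝ) (α : S → ℝ) (γ : ℝ)
    (hP : ∀ s a s', 0 ≤ P s a s') (hPsum : ∀ s a, ∑ s', P s a s' = 1)
    (hα : ∀ s, 0 ≤ α s) (hαsum : ∑ s, α s = 1)
    (hγ0 : 0 ≤ γ) (hγ1 : γ < 1)
    (π : S → A → ℝ) (hπ : isPolicy π) :
    uOcc P α γ π ∈ Uset P α γ ∧ ∑ w : S × A, uOcc P α γ π w = 1 := by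
  have hM := Pmat_mem_rowStochastic hP hPsum hπ
  have hnonneg : ∀ w, 0 ≤ uOcc P α γ π w := fun w =>
    mul_nonneg (dOcc_nonneg hM hα hγ0 hγ1.le w.1) (hπ.1 w.1 w.2)
  have hflow : (Amat P γ)ᵀ *ᵥ uOcc P α γ π = (1 - γ) • α :=
    (transpose_Amat_mulVec_of_sum_eq_one P γ hπ.2 (dOcc P α γ π)).trans <|
      sub_eq_of_eq_add (dOcc_eq_add_smul_transpose_Pmat_mulVec hM (abs_lt.2 ⟨by linarith, hγ1⟩) α)
  have hmem : uOcc P α γ π ∈ Uset P α γ := ⟨hnonneg, hflow⟩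
  exact ⟨hmem, (sum_eq_of_mem_Uset hPsum hγ1.ne hmem).trans hαsum⟩
end

section
/- Let u ∈ U be such that ∑_{a'∈A} u(s,a') > 0 for every state s, and define the randomized policy π'(s,a) = u(s,a)/∑_{a'∈A} u(s,a'). Then the state-action occupancy frequency of π' equals u, i.e. u_{π'} = u. -/
open Matrix BigOperators

open DRADP

/-!
Put `d s = ∑ a, u (s, a)`, so that `u (s, a) = d s * π s a`. The constraint `Aᵀ u = (1 - γ) α` then
reads `d (1 - γ P_π) = (1 - γ) α` for the row vectors `d` and `α`. As `γ P_π` has `ℓ^∞` operator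
norm less than one, the Neumann series inverts `1 - γ P_π` and gives
`d = (1 - γ) ∑ γ ^ t α P_π ^ t`, which is `d_π`.
-/

namespace DRADP

open scoped Matrix.Norms.Operator

theorem hasSum_vecMul_one_sub_vecMul_pow {n R : Type*} [Fintype n] [DecidableEq n] [NormedRing R]
    [CompleteSpace R] {M : Matrix n n R} (hM : ‖M‖ < 1) (v : n → R) :
    HasSum (fun t : ℕ => (v ᵥ* (1 - M)) ᵥ* M ^ t) v := by
  -- The uniformity of the operator norm unfolds to that of `n → n → R`, but not reducibly.
  have : @CompleteSpace (Matrix n n R) PseudoMetricSpace.toUniformSpace :=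
    inferInstanceAs (CompleteSpace (n → n → R))
  have hpow : HasSum (fun t : ℕ => M ^ t) (∑' t : ℕ, M ^ t) :=
    (summable_geometric_of_norm_lt_one hM).hasSum
  have hinv : (1 - M) * ∑' t : ℕ, M ^ t = 1 := mul_neg_geom_series M hM
  have hcont : Continuous fun N : Matrix n n R => (v ᵥ* (1 - M)) ᵥ* N :=
    continuous_const.matrix_vecMul continuous_id
  simpa [Function.comp_def, vecMul_vecMul, hinv] using
    hpow.map (vecMulBilin ℕ ℕ (v ᵥ* (1 - M))) hcont

variable {S A : Type*} [Fintype A]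

theorem isPolicy_div_sum {w : S → A → ℝ} (hw : ∀ s a, 0 ≤ w s a) (hsum : ∀ s, ∑ a, w s a ≠ 0) :
    isPolicy fun s a => w s a / ∑ a', w s a' :=
  ⟨fun s a => div_nonneg (hw s a) (Finset.sum_nonneg fun a' _ => hw s a'),
    fun s => by rw [← Finset.sum_div, div_self (hsum s)]⟩

variable [Fintype S] {P : S → A → S → ℝ} {π : S → A → ℝ}

theorem sum_abs_Pmat_le_one (hP : ∀ s a, ∑ s', |P s a s'| ≤ 1) (hπ : isPolicy π) (s : S) :
    ∑ s', |Pmat P π s s'| ≤ 1 :=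
  calc ∑ s', |Pmat P π s s'|
      ≤ ∑ s', ∑ a, |P s a s'| * π s a := by
        refine Finset.sum_le_sum fun s' _ => (Finset.abs_sum_le_sum_abs _ _).trans_eq ?_
        simp only [abs_mul, abs_of_nonneg (hπ.1 s _)]
    _ = ∑ a, (∑ s', |P s a s'|) * π s a := by
        rw [Finset.sum_comm]
        simp only [Finset.sum_mul]
    _ ≤ ∑ a, π s a :=
        Finset.sum_le_sum fun a _ => mul_le_of_le_one_left (hπ.1 s a) (hP s a)
    _ = 1 := hπ.2 s

theorem norm_Pmat_le_one (hP : ∀ s a, ∑ s', |P s a s'| ≤ 1) (hπ : isPolicy π) :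
    ‖Pmat P π‖ ≤ 1 := by
  rw [linfty_opNorm_def, NNReal.coe_le_one]
  refine Finset.sup_le fun s _ => ?_
  rw [← NNReal.coe_le_one]
  simpa using sum_abs_Pmat_le_one hP hπ s

theorem norm_smul_Pmat_lt_one {γ : ℝ} (hP : ∀ s a, ∑ s', |P s a s'| ≤ 1) (hπ : isPolicy π)
    (hγ : |γ| < 1) : ‖γ • Pmat P π‖ < 1 :=
  calc ‖γ • Pmat P π‖ ≤ ‖γ‖ * ‖Pmat P π‖ := norm_smul_le γ (Pmat P π)
    _ ≤ ‖γ‖ := mul_le_of_le_one_right (norm_nonneg γ) (norm_Pmat_le_one hP hπ)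
    _ < 1 := hγ

variable [DecidableEq S] {α : S → ℝ} {γ : ℝ}

theorem Amat_transpose_mulVec_mul (hπ : ∀ s, ∑ a, π s a = 1) (d : S → ℝ) :
    (Amat P γ)ᵀ *ᵥ (fun w => d w.1 * π w.1 w.2) = d ᵥ* (1 - γ • Pmat P π) := by
  have hrow (s s' : S) : ∑ a, Amat P γ (s, a) s' * π s a = (1 - γ • Pmat P π) s s' := by
    simp [Amat, Pmat, one_apply, sub_mul, Finset.sum_sub_distrib, ← Finset.mul_sum, hπ, mul_assoc]
  funext s'
  simp only [mulVec, vecMul, dotProduct, transpose_apply, Fintype.sum_prod_type]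
  refine Finset.sum_congr rfl fun s _ => ?_
  rw [← hrow, Finset.mul_sum]
  exact Finset.sum_congr rfl fun a _ => mul_left_comm _ _ _

theorem dOcc_eq_of_vecMul_eq {d : S → ℝ} (hnorm : ‖γ • Pmat P π‖ < 1)
    (hd : d ᵥ* (1 - γ • Pmat P π) = (1 - γ) • α) : dOcc P α γ π = d := by
  have hseries := hasSum_vecMul_one_sub_vecMul_pow hnorm d
  rw [hd] at hseries
  funext s
  rw [dOcc, ← tsum_mul_left, ← (Pi.hasSum.mp hseries s).tsum_eq]
  refine tsum_congr fun t => ?_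
  rw [← transpose_pow, mulVec_transpose, smul_pow, smul_vecMul, vecMul_smul]
  rfl

end DRADP

theorem uOcc_of_mem_Uset_general {S A : Type*} [Fintype S] [Fintype A] [DecidableEq S]
    {P : S → A → S → ℝ} {α : S → ℝ} {γ : ℝ} {π : S → A → ℝ} {u : S × A → ℝ}
    (hP : ∀ s a, ∑ s', |P s a s'| ≤ 1) (hγ : |γ| < 1) (hπ : isPolicy π)
    (hu : (Amat P γ)ᵀ *ᵥ u = fun s => (1 - γ) * α s)
    (huπ : ∀ s a, u (s, a) = (∑ a', u (s, a')) * π s a) :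
    uOcc P α γ π = u := by
  set d : S → ℝ := fun s => ∑ a, u (s, a)
  have hfactor : u = fun w => d w.1 * π w.1 w.2 := funext fun w => huπ w.1 w.2
  have hbalance : d ᵥ* (1 - γ • Pmat P π) = (1 - γ) • α := by
    rw [← Amat_transpose_mulVec_mul hπ.2, ← hfactor, hu]
    rfl
  have hdOcc : dOcc P α γ π = d := dOcc_eq_of_vecMul_eq (norm_smul_Pmat_lt_one hP hπ hγ) hbalance
  rw [hfactor, ← hdOcc]
  rfl

/-- if `u ∈ U` has positive marginals, then the occupancy frequency of the
policy `π'(s,a) = u(s,a)/∑_{a'} u(s,a')` equals `u`. -/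
theorem uOcc_of_mem_Uset {S A : Type*} [Fintype S] [Fintype A] [DecidableEq S]
    (P : S → A → S → ℝ) (α : S → ℝ) (γ : ℝ)
    (hP : ∀ s a s', 0 ≤ P s a s') (hPsum : ∀ s a, ∑ s', P s a s' = 1)
    (hα : ∀ s, 0 ≤ α s) (hαsum : ∑ s, α s = 1)
    (hγ0 : 0 ≤ γ) (hγ1 : γ < 1)
    (u : S × A → ℝ) (hu : u ∈ Uset P α γ)
    (hpos : ∀ s, 0 < ∑ a' : A, u (s, a')) :
    uOcc P α γ (fun s a => u (s, a) / ∑ a' : A, u (s, a')) = u := by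
  have hP1 (s : S) (a : A) : ∑ s', |P s a s'| ≤ 1 := by simp [abs_of_nonneg (hP s a _), hPsum]
  exact uOcc_of_mem_Uset_general hP1 (abs_lt.mpr ⟨by linarith, hγ1⟩)
    (isPolicy_div_sum (fun s a => hu.1 (s, a)) fun s => (hpos s).ne') hu.2
    fun s a => (mul_div_cancel₀ (u (s, a)) (hpos s).ne').symm
end
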